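/- Fix m, N ∈ ℕ with N ≥ 1, Borel probability measures ν₁, …, ν_N on ℝ^m, nonempty constraint sets U₀, …, U_{N−1} ⊆ ℝ^m, and Borel target sets X₁, …, X_N ⊆ ℝ. Assume the Bellman value functions J_k and the cost functions V_k of a given Markov policy π = (u₀, …, u_{N−1}) with u_k(x) ∈ U_k for all x are Borel measurable. Then for every x ∈ ℝ and every k ∈ {0, …, N}, V_k(x) ≤ J_k(x); in particular V₀(x₀) ≤ J₀(x₀) for every initial value x₀, so the Bellman recursion upper-bounds the joint target-achievement probability of every admissible Markov policy. -/

import Mathlib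

/-!
Backward induction on the stage carries the joint bounds `0 ≤ V k ≤ J k ≤ 1`. For `V k ≤ J k`, the
one-step integral is monotone in the cost-to-go, and the control `u k x ∈ U k` is one of the
competitors in the supremum defining `J k x`. The bounds `0 ≤ J k ≤ 1` keep the real-valued
operators off their junk values: they make the Bellman integrand integrable and the family in the
supremum bounded above, and they make harmless the value `0` that `⨆ v ∈ U k` assigns to `v ∉ U k`.
-/

open MeasureTheory Finset

/-- The one-step integrand is integrable when the cost-to-go is measurable with values in `[0, 1]`. -/
theorem integrable_step {m : ℕ} (μ : Measure (Fin m → ℝ)) [IsProbabilityMeasure μ]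
    {S : Set ℝ} (hS : MeasurableSet S) {f : ℝ → ℝ} (hf : Measurable f)
    (h0 : ∀ x, 0 ≤ f x) (h1 : ∀ x, f x ≤ 1) (x : ℝ) (v : Fin m → ℝ) :
    Integrable (fun y : Fin m → ℝ => S.indicator (1 : ℝ → ℝ) (x * (1 + ∑ i, v i * y i)) *
      f (x * (1 + ∑ i, v i * y i))) μ := by
  have hg : Measurable (fun y : Fin m → ℝ => x * (1 + ∑ i, v i * y i)) := by fun_prop
  have hi : Measurable (S.indicator (1 : ℝ → ℝ)) := measurable_one.indicator hS
  refine Integrable.of_bound (C := 1)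
    ((hi.comp hg).mul (hf.comp hg)).aestronglyMeasurable (ae_of_all _ fun y => ?_)
  have hf0 := h0 (x * (1 + ∑ i, v i * y i))
  have hf1 := h1 (x * (1 + ∑ i, v i * y i))
  by_cases h : x * (1 + ∑ i, v i * y i) ∈ S
  · simpa [h, abs_of_nonneg hf0] using hf1
  · simp [h]

theorem indicator_one_nonneg (S : Set ℝ) (z : ℝ) : 0 ≤ S.indicator (1 : ℝ → ℝ) z :=
  Set.indicator_nonneg (fun _ _ => zero_le_one) z

theorem indicator_one_le_one (S : Set ℝ) (z : ℝ) : S.indicator (1 : ℝ → ℝ) z ≤ 1 :=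
  Set.indicator_le_self' (fun _ _ => zero_le_one) z

theorem step_nonneg {m : ℕ} (μ : Measure (Fin m → ℝ)) (S : Set ℝ) {f : ℝ → ℝ}
    (h0 : ∀ x, 0 ≤ f x) (x : ℝ) (v : Fin m → ℝ) :
    0 ≤ ∫ y, S.indicator (1 : ℝ → ℝ) (x * (1 + ∑ i, v i * y i)) *
      f (x * (1 + ∑ i, v i * y i)) ∂μ :=
  integral_nonneg fun _ => mul_nonneg (indicator_one_nonneg S _) (h0 _)

theorem step_le_one {m : ℕ} (μ : Measure (Fin m → ℝ)) [IsProbabilityMeasure μ] (S : Set ℝ)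
    {f : ℝ → ℝ} (h0 : ∀ x, 0 ≤ f x) (h1 : ∀ x, f x ≤ 1) (x : ℝ) (v : Fin m → ℝ) :
    ∫ y, S.indicator (1 : ℝ → ℝ) (x * (1 + ∑ i, v i * y i)) *
      f (x * (1 + ∑ i, v i * y i)) ∂μ ≤ 1 := by
  have h := integral_mono_of_nonneg (μ := μ)
    (f := fun y => S.indicator (1 : ℝ → ℝ) (x * (1 + ∑ i, v i * y i)) *
      f (x * (1 + ∑ i, v i * y i))) (g := fun _ => (1 : ℝ))
    (ae_of_all _ fun _ => mul_nonneg (indicator_one_nonneg S _) (h0 _))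
    (integrable_const _)
    (ae_of_all _ fun _ => mul_le_one₀ (indicator_one_le_one S _) (h0 _) (h1 _))
  simpa using h

/-- The Bellman value functions upper-bound the cost functions of every admissible
Markov policy; in particular the Bellman recursion upper-bounds the joint
target-achievement probability of every admissible Markov policy. -/
theorem bellman_upper_bounds_cost
    (m N : ℕ) (hN : 1 ≤ N)
    (ν : ℕ → Measure (Fin m → ℝ)) (hν : ∀ k, IsProbabilityMeasure (ν k))
    (U : ℕ → Set (Fin m → ℝ)) (hU : ∀ k, (U k).Nonempty)
    (u : ℕ → ℝ → (Fin m → ℝ)) (humeas : ∀ k, Measurable (u k))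
    (hadm : ∀ k, k < N → ∀ x : ℝ, u k x ∈ U k)
    (X : ℕ → Set ℝ) (hX : ∀ k, MeasurableSet (X k))
    (V : ℕ → ℝ → ℝ) (hVmeas : ∀ k, Measurable (V k))
    (hVN : ∀ x, V N x = (X N).indicator 1 x)
    (hVk : ∀ k, k < N → ∀ x, V k x =
      ∫ y, (X (k + 1)).indicator 1 (x * (1 + ∑ i, u k x i * y i)) *
        V (k + 1) (x * (1 + ∑ i, u k x i * y i)) ∂(ν (k + 1)))
    (J : ℕ → ℝ → ℝ) (hJmeas : ∀ k, Measurable (J k))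
    (hJN : ∀ x, J N x = (X N).indicator 1 x)
    (hJk : ∀ k, k < N → ∀ x, J k x =
      ⨆ v ∈ U k, ∫ y, (X (k + 1)).indicator 1 (x * (1 + ∑ i, v i * y i)) *
        J (k + 1) (x * (1 + ∑ i, v i * y i)) ∂(ν (k + 1))) :
    ∀ x : ℝ, ∀ k, k ≤ N → V k x ≤ J k x := by
  have key : ∀ k, k ≤ N → ∀ x, 0 ≤ V k x ∧ V k x ≤ J k x ∧ J k x ≤ 1 := by
    intro k hk
    induction hk using Nat.decreasingInduction with
    | self =>
      intro x
      rw [hVN, hJN]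
      exact ⟨indicator_one_nonneg _ _, le_rfl, indicator_one_le_one _ _⟩
    | of_succ k hk ih =>
      intro x
      have := hν (k + 1)
      have hV0 : ∀ z, 0 ≤ V (k + 1) z := fun z => (ih z).1
      have hVJ : ∀ z, V (k + 1) z ≤ J (k + 1) z := fun z => (ih z).2.1
      have hJ1 : ∀ z, J (k + 1) z ≤ 1 := fun z => (ih z).2.2
      have hJ0 : ∀ z, 0 ≤ J (k + 1) z := fun z => (hV0 z).trans (hVJ z)
      -- The inner supremum, over proofs of `v ∈ U k`, is `0` when `v ∉ U k`, so it is at most `1`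
      -- for every `v`.
      have hle : ∀ v : Fin m → ℝ, (⨆ _ : v ∈ U k,
          ∫ y, (X (k + 1)).indicator (1 : ℝ → ℝ) (x * (1 + ∑ i, v i * y i)) *
            J (k + 1) (x * (1 + ∑ i, v i * y i)) ∂(ν (k + 1))) ≤ 1 := fun v =>
        Real.iSup_le (fun _ => step_le_one _ _ hJ0 hJ1 x v) zero_le_one
      refine ⟨?_, ?_, ?_⟩
      · rw [hVk k hk]
        exact step_nonneg _ _ hV0 x _
      · rw [hVk k hk, hJk k hk]
        refine le_trans ?_ (le_ciSup ⟨1, Set.forall_mem_range.2 hle⟩ (u k x))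
        rw [ciSup_pos (hadm k hk x)]
        exact integral_mono_of_nonneg
          (ae_of_all _ fun _ => mul_nonneg (indicator_one_nonneg _ _) (hV0 _))
          (integrable_step _ (hX _) (hJmeas _) hJ0 hJ1 x _)
          (ae_of_all _ fun _ => mul_le_mul_of_nonneg_left (hVJ _) (indicator_one_nonneg _ _))
      · rw [hJk k hk]
        exact Real.iSup_le hle zero_le_one
  exact fun x k hk => (key k hk x).2.1
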